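/- For all z ∈ ℂ and τ ∈ ℍ, ϖ(z,τ) · ϖ(−z,τ) · η(τ) = −i · e(−τ/12) · (e(z/2) − e(−z/2)) · ϑ₁(z,τ). (A form of the Jacobi triple product identity.) -/

import Mathlib

/-!
The identity follows from the classical Jacobi triple product
`∏ (1 - q^(k+1)) (1 - x q^k) (1 - x⁻¹ q^(k+1)) = ∑ (-1)^n q^(n(n-1)/2) x^n`
with `q = e(τ)`, `x = e(z)`: the product `ϖ(-z,τ)` contributes the extra factor `1 - x⁻¹`, and
the theta series becomes the series above after the shift `n ↦ n - 1`.

The triple product is obtained from its finite version. Writing `(q)_m = ∏_{k<m} (1 - q^(k+1))`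
and `T n = (-1)^n q^(n(n-1)/2) x^n`, one has
`∏_{k<N} (1 - x q^k) (1 - x⁻¹ q^(k+1)) = ∑_n T n * (q)_{2N} / ((q)_{N+n} (q)_{N-n})`
(`hasSum_finite_triple_product`), proved by induction on `N`; with the convention
`1 / (q)_m = 0` for `m < 0` the recursion `1/(q)_(m-1) = (1 - q^m)/(q)_m` holds for every integer
`m`, so that the sum can be taken over `ℤ` without boundary terms. As `N → ∞` the `n`-th term
tends to `T n / (q)_∞` and is bounded by a constant times `‖T n‖`, so dominated convergence
yields the infinite version (`triple_product_of_recursion`).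
-/

open Complex

/-- `e(z) = exp(2πiz)`. -/
noncomputable def ee (z : ℂ) : ℂ := Complex.exp (2 * Real.pi * Complex.I * z)

/-- The infinite q-Pochhammer product `ϖ(z,τ) = ∏_{k≥0} (1 − e(z+kτ))`. -/
noncomputable def varpi (z τ : ℂ) : ℂ := ∏' k : ℕ, (1 - ee (z + (k : ℂ) * τ))

/-- The Dedekind eta function `η(τ) = e(τ/24) ∏_{k≥1} (1 − e(kτ))`. -/
noncomputable def dedekindEta (τ : ℂ) : ℂ :=
  ee (τ / 24) * ∏' k : ℕ, (1 - ee (((k : ℂ) + 1) * τ))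

/-- The first Jacobi theta function `ϑ₁(z,τ)`. -/
noncomputable def theta1 (z τ : ℂ) : ℂ :=
  - ∑' n : ℤ, ee ((1/2) * ((n : ℂ) + 1/2)^2 * τ + ((n : ℂ) + 1/2) * (z + 1/2))

open Filter Topology

/-- The finite `q`-Pochhammer product `(q)_m = ∏_{k<m} (1 - q^(k+1))`. -/
noncomputable def qPoch (q : ℂ) (m : ℕ) : ℂ := ∏ k ∈ Finset.range m, (1 - q ^ (k + 1))

/-- The reciprocal `1 / (q)_m`, extended by `0` to negative `m`. -/
noncomputable def qRec (q : ℂ) (m : ℤ) : ℂ := if m < 0 then 0 else (qPoch q m.toNat)⁻¹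

lemma one_sub_pow_succ_ne_zero {q : ℂ} (hq : ‖q‖ < 1) (k : ℕ) : 1 - q ^ (k + 1) ≠ 0 := by
  intro h
  have h1 : ‖q ^ (k + 1)‖ = 1 := by rw [← sub_eq_zero.mp h, norm_one]
  rw [norm_pow] at h1
  exact (pow_lt_one₀ (norm_nonneg q) hq (Nat.succ_ne_zero k)).ne h1

lemma qPoch_ne_zero {q : ℂ} (hq : ‖q‖ < 1) (m : ℕ) : qPoch q m ≠ 0 :=
  Finset.prod_ne_zero_iff.mpr fun k _ => one_sub_pow_succ_ne_zero hq k

/-- At `m = 0` both sides vanish, the left one by convention and the right one because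
`1 - q ^ 0 = 0`; this is what removes the boundary terms from the finite triple product. -/
lemma qRec_sub_one {q : ℂ} (hq : ‖q‖ < 1) (m : ℤ) :
    qRec q (m - 1) = (1 - q ^ m) * qRec q m := by
  rcases lt_trichotomy m 0 with h | rfl | h
  · simp [qRec, h, show m - 1 < 0 by lia]
  · simp [qRec]
  · obtain ⟨k, rfl⟩ : ∃ k : ℕ, m = (k : ℤ) + 1 := ⟨(m - 1).toNat, by lia⟩
    have h1 : ¬ ((k : ℤ) + 1 < 0) := by lia
    have h2 : ((k : ℤ) + 1).toNat = k + 1 := by lia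
    have h3 := one_sub_pow_succ_ne_zero hq k
    have h4 := qPoch_ne_zero hq k
    have h5 : q ^ ((k : ℤ) + 1) = q ^ (k + 1) := by exact_mod_cast zpow_natCast q (k + 1)
    have h6 : qPoch q (k + 1) = qPoch q k * (1 - q ^ (k + 1)) := Finset.prod_range_succ _ _
    have h7 : qRec q ((k : ℤ) + 1 - 1) = (qPoch q k)⁻¹ := by simp [qRec]
    rw [h7, qRec, if_neg h1, h2, h6, h5]
    field_simp

lemma multipliable_one_sub_mul_pow {q : ℂ} (hq : ‖q‖ < 1) (y : ℂ) :
    Multipliable fun k : ℕ => 1 - y * q ^ k := by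
  have : Summable fun k : ℕ => ‖-(y * q ^ k)‖ := by
    simpa using (summable_geometric_of_lt_one (norm_nonneg q) hq).mul_left ‖y‖
  simpa [sub_eq_add_neg] using multipliable_one_add_of_summable this

lemma tendsto_qPoch {q : ℂ} (hq : ‖q‖ < 1) :
    Tendsto (qPoch q) atTop (𝓝 (∏' k : ℕ, (1 - q ^ (k + 1)))) := by
  have := multipliable_one_sub_mul_pow hq q
  simp_rw [← pow_succ'] at this
  exact this.tendsto_prod_tprod_nat

lemma tprod_qPoch_ne_zero {q : ℂ} (hq : ‖q‖ < 1) : ∏' k : ℕ, (1 - q ^ (k + 1)) ≠ 0 := by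
  have hs : Summable fun k : ℕ => ‖-(q ^ (k + 1))‖ := by
    simpa using (summable_nat_add_iff 1).mpr (summable_geometric_of_lt_one (norm_nonneg q) hq)
  have := tprod_one_add_ne_zero_of_summable (f := fun k : ℕ => -(q ^ (k + 1)))
    (fun k => by simpa [sub_eq_add_neg] using one_sub_pow_succ_ne_zero hq k) hs
  simpa [sub_eq_add_neg] using this

/-- The finite triple product. The coefficients `T n = (-1)^n q^(n(n-1)/2) x^n` enter only through
the recursion they satisfy. -/
lemma hasSum_finite_triple_product {q x : ℂ} (hq0 : q ≠ 0) (hq : ‖q‖ < 1) (hx : x ≠ 0)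
    {T : ℤ → ℂ} (hT0 : T 0 = 1) (hT : ∀ n, T (n + 1) = -x * q ^ n * T n) (N : ℕ) :
    HasSum (fun n : ℤ => T n * (qPoch q (2 * N) * (qRec q (N + n) * qRec q (N - n))))
      (∏ k ∈ Finset.range N, ((1 - x * q ^ k) * (1 - x⁻¹ * q ^ (k + 1)))) := by
  induction N with
  | zero =>
    convert! hasSum_ite_eq (0 : ℤ) (1 : ℂ) using 2 with n
    rcases lt_trichotomy n 0 with h | rfl | h
    · simp [qRec, h, h.ne]
    · simp [qRec, qPoch, hT0]
    · simp [qRec, h, h.ne']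
  | succ N ih =>
    have ihl := (Equiv.subRight (1 : ℤ)).hasSum_iff.mpr ih
    have ihr := (Equiv.addRight (1 : ℤ)).hasSum_iff.mpr ih
    rw [Finset.prod_range_succ]
    set P := ∏ k ∈ Finset.range N, ((1 - x * q ^ k) * (1 - x⁻¹ * q ^ (k + 1)))
    -- Expand the new factor as `(1 + q^(2N+1)) - x q^N - x⁻¹ q^(N+1)`.
    have key := ((ih.mul_left (1 + q ^ (2 * N + 1))).sub (ihl.mul_left (x * q ^ N))).sub
      (ihr.mul_left (x⁻¹ * q ^ (N + 1)))
    convert! key using 1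
    · funext n
      simp only [Function.comp_apply, Equiv.subRight_apply, Equiv.coe_addRight]
      have hu : q ^ n ≠ 0 := zpow_ne_zero _ hq0
      have hp : T (n - 1) = -(q * (q ^ n)⁻¹ * x⁻¹ * T n) := by
        have := hT (n - 1)
        rw [sub_add_cancel, zpow_sub_one₀ hq0] at this
        rw [this]; field_simp
      have e1 : qPoch q (2 * (N + 1))
          = qPoch q (2 * N) * (1 - q ^ (2 * N + 1)) * (1 - q ^ (2 * N + 2)) := by
        rw [show 2 * (N + 1) = 2 * N + 1 + 1 by ring, qPoch, Finset.prod_range_succ,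
          Finset.prod_range_succ, qPoch]
      -- All reciprocals are expressed through those at `N + 1 + n` and `N + 1 - n`.
      have a1 : qRec q (N + n) = (1 - q ^ N * q ^ n * q) * qRec q (N + 1 + n) := by
        have := qRec_sub_one hq (N + 1 + n)
        rw [show (N : ℤ) + 1 + n - 1 = N + n by ring] at this
        rw [this, show (N : ℤ) + 1 + n = N + n + 1 by ring, zpow_add_one₀ hq0, zpow_add₀ hq0,
          zpow_natCast]
      have a2 : qRec q (N + (n - 1)) = (1 - q ^ N * q ^ n) * qRec q (N + n) := by
        have := qRec_sub_one hq (N + n)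
        rw [show (N : ℤ) + n - 1 = N + (n - 1) by ring] at this
        rw [this, zpow_add₀ hq0, zpow_natCast]
      have b1 : qRec q (N - n) = (1 - q ^ N * (q ^ n)⁻¹ * q) * qRec q (N + 1 - n) := by
        have := qRec_sub_one hq (N + 1 - n)
        rw [show (N : ℤ) + 1 - n - 1 = N - n by ring] at this
        rw [this, show (N : ℤ) + 1 - n = N - n + 1 by ring, zpow_add_one₀ hq0, zpow_sub₀ hq0,
          zpow_natCast, div_eq_mul_inv]
      have b2 : qRec q (N - (n + 1)) = (1 - q ^ N * (q ^ n)⁻¹) * qRec q (N - n) := by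
        have := qRec_sub_one hq (N - n)
        rw [show (N : ℤ) - n - 1 = N - (n + 1) by ring] at this
        rw [this, zpow_sub₀ hq0, zpow_natCast, div_eq_mul_inv]
      have c1 : (N : ℤ) - (n - 1) = N + 1 - n := by ring
      have c2 : (N : ℤ) + (n + 1) = N + 1 + n := by ring
      push_cast
      rw [c1, c2, a2, b2, a1, b1, hp, hT n, e1]
      generalize qRec q (N + 1 + n) = A
      generalize qRec q (N + 1 - n) = B
      have d1 : q ^ (2 * N + 1) = (q ^ N) ^ 2 * q := by ring
      have d2 : q ^ (2 * N + 2) = (q ^ N) ^ 2 * q ^ 2 := by ring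
      have d3 : q ^ (N + 1) = q ^ N * q := pow_succ q N
      rw [d1, d2, d3]
      generalize q ^ N = a
      generalize q ^ n = u at hu ⊢
      field_simp
      ring
    · field_simp
      ring

/-- The Jacobi triple product, for coefficients `T n = (-1)^n q^(n(n-1)/2) x^n` given by their
recursion. -/
lemma triple_product_of_recursion {q x : ℂ} (hq0 : q ≠ 0) (hq : ‖q‖ < 1) (hx : x ≠ 0)
    {T : ℤ → ℂ} (hT0 : T 0 = 1) (hT : ∀ n, T (n + 1) = -x * q ^ n * T n) (hs : Summable T) :
    (∏' k : ℕ, (1 - x * q ^ k)) * (∏' k : ℕ, (1 - x⁻¹ * q ^ (k + 1)))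
      * ∏' k : ℕ, (1 - q ^ (k + 1)) = ∑' n, T n := by
  set E := ∏' k : ℕ, (1 - q ^ (k + 1)) with hE
  have hE0 : E ≠ 0 := tprod_qPoch_ne_zero hq
  have hP : Tendsto (qPoch q) atTop (𝓝 E) := tendsto_qPoch hq
  have hR : Tendsto (fun m : ℕ => (qPoch q m)⁻¹) atTop (𝓝 E⁻¹) := hP.inv₀ hE0
  have hRZ : Tendsto (qRec q) atTop (𝓝 E⁻¹) := by
    have h1 : Tendsto (fun m : ℤ => m.toNat) atTop atTop :=
      tendsto_atTop.mpr fun b => (eventually_ge_atTop (b : ℤ)).mono fun m hm => by lia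
    refine (hR.comp h1).congr' ?_
    filter_upwards [eventually_ge_atTop (0 : ℤ)] with m hm
    simp [qRec, not_lt.mpr hm]
  obtain ⟨C, hC⟩ := (Metric.isBounded_range_of_tendsto _ hP).exists_norm_le
  obtain ⟨D, hD⟩ := (Metric.isBounded_range_of_tendsto _ hR).exists_norm_le
  have hC0 : 0 ≤ C := (norm_nonneg _).trans (hC _ ⟨0, rfl⟩)
  have hD0 : 0 ≤ D := (norm_nonneg _).trans (hD _ ⟨0, rfl⟩)
  have hDZ : ∀ m, ‖qRec q m‖ ≤ D := by
    intro m
    unfold qRec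
    split_ifs
    · simpa using hD0
    · exact hD _ ⟨_, rfl⟩
  have hlim : Tendsto (fun N : ℕ => ∑' n : ℤ,
      T n * (qPoch q (2 * N) * (qRec q (N + n) * qRec q (N - n)))) atTop
      (𝓝 (∑' n : ℤ, T n * (E * (E⁻¹ * E⁻¹)))) := by
    refine tendsto_tsum_of_dominated_convergence (bound := fun n => ‖T n‖ * (C * (D * D)))
      (hs.norm.mul_right _) ?_ (Eventually.of_forall fun N n => ?_)
    · intro n
      have t1 : Tendsto (fun N : ℕ => 2 * N) atTop atTop :=
        tendsto_id.const_mul_atTop' (by norm_num)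
      have t2 : Tendsto (fun N : ℕ => (N : ℤ) + n) atTop atTop :=
        tendsto_atTop_add_const_right _ _ tendsto_natCast_atTop_atTop
      have t3 : Tendsto (fun N : ℕ => (N : ℤ) - n) atTop atTop :=
        tendsto_atTop_add_const_right _ _ tendsto_natCast_atTop_atTop
      exact ((hP.comp t1).mul ((hRZ.comp t2).mul (hRZ.comp t3))).const_mul _
    · simp only [norm_mul]
      gcongr
      · exact hC _ ⟨_, rfl⟩
      · exact hDZ _
      · exact hDZ _
  have hprod := (multipliable_one_sub_mul_pow hq x).tendsto_prod_tprod_nat.mul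
    (show Multipliable fun k : ℕ => 1 - x⁻¹ * q ^ (k + 1) by
      simpa [pow_succ', mul_assoc] using
        multipliable_one_sub_mul_pow hq (x⁻¹ * q)).tendsto_prod_tprod_nat
  simp_rw [← Finset.prod_mul_distrib] at hprod
  simp_rw [(hasSum_finite_triple_product hq0 hq hx hT0 hT _).tsum_eq] at hlim
  rw [tendsto_nhds_unique hprod hlim, tsum_mul_right]
  field_simp

lemma ee_add (a b : ℂ) : ee (a + b) = ee a * ee b := by
  rw [ee, ee, ee, ← Complex.exp_add]; ring_nf

lemma ee_zero : ee 0 = 1 := by simp [ee]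

lemma ee_ne_zero (a : ℂ) : ee a ≠ 0 := Complex.exp_ne_zero _

lemma ee_neg (a : ℂ) : ee (-a) = (ee a)⁻¹ := by
  rw [ee, ee, ← Complex.exp_neg]; ring_nf

lemma ee_int_mul (n : ℤ) (a : ℂ) : ee (n * a) = ee a ^ n := by
  rw [ee, ee, ← Complex.exp_int_mul]; ring_nf

lemma ee_nat_mul (n : ℕ) (a : ℂ) : ee (n * a) = ee a ^ n := by
  rw [ee, ee, ← Complex.exp_nat_mul]; ring_nf

lemma ee_half : ee (1 / 2) = -1 := by
  rw [ee, ← Complex.exp_pi_mul_I]; ring_nf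

lemma ee_neg_quarter : ee (-1 / 4) = -Complex.I := by
  rw [ee, ← Complex.exp_neg_pi_div_two_mul_I]; ring_nf

lemma norm_ee_lt_one {τ : ℂ} (hτ : 0 < τ.im) : ‖ee τ‖ < 1 := by
  rw [ee, Complex.norm_exp, Real.exp_lt_one_iff]
  simp
  positivity

/-- The term `(-1)^n q^(n(n-1)/2) x^n` for `q = e(τ)`, `x = e(z)`, with the sign written as
`e(n/2)`. -/
noncomputable def tripleTerm (z τ : ℂ) (n : ℤ) : ℂ :=
  ee ((n : ℂ) * (n - 1) / 2 * τ + n * (z + 1 / 2))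

lemma tripleTerm_zero (z τ : ℂ) : tripleTerm z τ 0 = 1 := by simp [tripleTerm, ee_zero]

lemma tripleTerm_succ (z τ : ℂ) (n : ℤ) :
    tripleTerm z τ (n + 1) = -ee z * ee τ ^ n * tripleTerm z τ n := by
  have : ((n + 1 : ℤ) : ℂ) * ((n + 1 : ℤ) - 1) / 2 * τ + ((n + 1 : ℤ) : ℂ) * (z + 1 / 2)
      = 1 / 2 + (z + (n * τ + ((n : ℂ) * (n - 1) / 2 * τ + n * (z + 1 / 2)))) := by
    push_cast; ring
  rw [tripleTerm, this, ee_add, ee_add, ee_add, ee_int_mul, ee_half, tripleTerm]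
  ring

lemma summable_tripleTerm (z : ℂ) {τ : ℂ} (hτ : 0 < τ.im) : Summable (tripleTerm z τ) := by
  refine ((summable_jacobiTheta₂_term_iff (z + 1 / 2 - τ / 2) τ).mpr hτ).congr fun n => ?_
  rw [jacobiTheta₂_term, tripleTerm, ee]
  ring_nf

lemma theta1_eq (z τ : ℂ) :
    theta1 z τ = Complex.I * ee (τ / 8) * ee (-z / 2) * ∑' n, tripleTerm z τ n := by
  rw [theta1, ← (Equiv.subRight (1 : ℤ)).tsum_eq, ← tsum_mul_left, ← tsum_neg]
  congr 1
  funext n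
  have : (1 / 2) * (((n - 1 : ℤ) : ℂ) + 1 / 2) ^ 2 * τ + (((n - 1 : ℤ) : ℂ) + 1 / 2) * (z + 1 / 2)
      = -1 / 4 + (τ / 8 + (-z / 2 + ((n : ℂ) * (n - 1) / 2 * τ + n * (z + 1 / 2)))) := by
    push_cast; ring
  rw [Equiv.subRight_apply, this, ee_add, ee_add, ee_add, ee_neg_quarter, tripleTerm]
  ring

lemma varpi_eq (z τ : ℂ) : varpi z τ = ∏' k : ℕ, (1 - ee z * ee τ ^ k) := by
  simp_rw [varpi, ee_add, ee_nat_mul]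

/-- A form of the Jacobi triple product identity:
`ϖ(z,τ)·ϖ(−z,τ)·η(τ) = −i·e(−τ/12)·(e(z/2) − e(−z/2))·ϑ₁(z,τ)`. -/
theorem jacobi_triple_product (z τ : ℂ) (hτ : 0 < τ.im) :
    varpi z τ * varpi (-z) τ * dedekindEta τ
      = -Complex.I * ee (-τ / 12) * (ee (z / 2) - ee (-z / 2)) * theta1 z τ := by
  have hq := norm_ee_lt_one hτ
  have main := triple_product_of_recursion (ee_ne_zero τ) hq (ee_ne_zero z)
    (tripleTerm_zero z τ) (tripleTerm_succ z τ) (summable_tripleTerm z hτ)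
  have hneg : varpi (-z) τ
      = (1 - (ee z)⁻¹) * ∏' k : ℕ, (1 - (ee z)⁻¹ * ee τ ^ (k + 1)) := by
    rw [varpi_eq, ee_neg, tprod_eq_zero_mul', pow_zero, mul_one]
    simpa [pow_succ', mul_assoc] using multipliable_one_sub_mul_pow hq ((ee z)⁻¹ * ee τ)
  have heta : dedekindEta τ = ee (τ / 24) * ∏' k : ℕ, (1 - ee τ ^ (k + 1)) := by
    rw [dedekindEta]
    congr 2
    funext k
    rw [← ee_nat_mul]; push_cast; rfl
  have hz : (ee (z / 2) - ee (-z / 2)) * ee (-z / 2) = 1 - (ee z)⁻¹ := by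
    rw [sub_mul, ← ee_add, ← ee_add, ← ee_neg, show z / 2 + -z / 2 = 0 by ring, ee_zero,
      show -z / 2 + -z / 2 = -z by ring]
  have hτ' : ee (-τ / 12) * ee (τ / 8) = ee (τ / 24) := by
    rw [← ee_add]; ring_nf
  rw [hneg, heta, theta1_eq, ← main, varpi_eq, ← hz, ← hτ']
  linear_combination ((ee (-τ / 12) * ee (τ / 8) * ((ee (z / 2) - ee (-z / 2)) * ee (-z / 2)) *
    ((∏' k : ℕ, (1 - ee z * ee τ ^ k)) * (∏' k : ℕ, (1 - (ee z)⁻¹ * ee τ ^ (k + 1))) *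
      ∏' k : ℕ, (1 - ee τ ^ (k + 1))))) * Complex.I_mul_I
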